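/- Let n ≥ 2, α ∈ (0,1) and s ∈ (0, α/2). Let u : ℝⁿ → ℝ be continuously differentiable with u and its gradient Du bounded and with finite Hölder seminorm [Du]_{C^{0,α}(ℝⁿ)} < ∞ (i.e. u ∈ C^{1,α}(ℝⁿ)). Then for every k ∈ {1,…,n} and every x ∈ ℝⁿ, the integrals v(x) := ∫_{ℝⁿ} (u(x) − u(y))/|x−y|^{n+2s} dy and ∫_{ℝⁿ} (∂ₖu(x) − ∂ₖu(y))/|x−y|^{n+2s} dy converge absolutely, v is differentiable at x, and ∂ₖ v(x) = ∫_{ℝⁿ} (∂ₖu(x) − ∂ₖu(y))/|x−y|^{n+2s} dy. -/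

import Mathlib

/-!
The translation `y = x - h` turns the singular integral into
`v x = ∫ h, (u x - u (x - h)) / ‖h‖ ^ (n + 2 s)`, whose kernel no longer depends on `x`, so that one
may differentiate under the integral sign: the derivative of the integrand is
`(Du x - Du (x - h)) / ‖h‖ ^ (n + 2 s)`. Since `Du` is bounded and `α`-Hölder, this is dominated,
uniformly in `x`, by a multiple of `min 1 (‖h‖ ^ α) / ‖h‖ ^ (n + 2 s)`, which is integrable near the
origin because `2 s < α` and near infinity because `0 < s` (`integrable_min_kernel`, by polar
coordinates). The integrand of `v` itself is handled by the same majorant with exponent `1` in place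
of `α`, because `u` is bounded and Lipschitz.
-/

open Real MeasureTheory

noncomputable section

theorem integrable_min_kernel (n : ℕ) (hn : 2 ≤ n) (β s : ℝ) (hs : 0 < s) (hsβ : 2 * s < β) :
    Integrable (fun h : EuclideanSpace ℝ (Fin n) =>
      (‖h‖ ^ ((n : ℝ) + 2 * s))⁻¹ * min 1 (‖h‖ ^ β)) := by
  have : Nonempty (Fin n) := ⟨⟨0, by omega⟩⟩
  rw [integrable_fun_norm_addHaar volume
    (f := fun r : ℝ => (r ^ ((n : ℝ) + 2 * s))⁻¹ * min 1 (r ^ β)), finrank_euclideanSpace_fin,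
    ← Set.Ioc_union_Ioi_eq_Ioi (zero_le_one (α := ℝ))]
  -- The Jacobian `r ^ (n - 1)` of polar coordinates reduces the kernel to a power independent of `n`.
  have hjac : ∀ r : ℝ, 0 < r →
      r ^ (n - 1) * (r ^ ((n : ℝ) + 2 * s))⁻¹ = r ^ (-1 - 2 * s) := by
    intro r hr
    rw [← Real.rpow_natCast, Nat.cast_sub (by omega), ← Real.rpow_neg hr.le, ← Real.rpow_add hr]
    congr 1
    push_cast
    ring
  refine IntegrableOn.union ?_ ?_
  · have h1 : IntegrableOn (fun r : ℝ => r ^ (β - 1 - 2 * s)) (Set.Ioc 0 1) :=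
      (intervalIntegrable_iff_integrableOn_Ioc_of_le zero_le_one).1
        (intervalIntegral.intervalIntegrable_rpow' (by linarith))
    refine h1.congr_fun (fun r hr => ?_) measurableSet_Ioc
    have : r ^ β ≤ 1 := Real.rpow_le_one hr.1.le hr.2 (by linarith)
    simp only [smul_eq_mul]
    rw [min_eq_right this, ← mul_assoc, hjac r hr.1, ← Real.rpow_add hr.1]
    congr 1
    ring
  · have h1 : IntegrableOn (fun r : ℝ => r ^ (-1 - 2 * s)) (Set.Ioi 1) :=
      integrableOn_Ioi_rpow_of_lt (by linarith) zero_lt_one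
    refine h1.congr_fun (fun r (hr : 1 < r) => ?_) measurableSet_Ioi
    have : 1 ≤ r ^ β := Real.one_le_rpow hr.le (by linarith)
    simp only [smul_eq_mul]
    rw [min_eq_left this, mul_one, hjac r (by linarith)]

/-- The majorant does not depend on the base point `x`; this uniformity is what permits
differentiation under the integral sign. -/
theorem norm_kernel_smul_le {n : ℕ} {β p : ℝ} {F : Type*} [NormedAddCommGroup F]
    [NormedSpace ℝ F] {g : EuclideanSpace ℝ (Fin n) → F} {A B : ℝ}
    (hA : ∀ x, ‖g x‖ ≤ A) (hB : ∀ x y, ‖g x - g y‖ ≤ B * ‖x - y‖ ^ β)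
    (x h : EuclideanSpace ℝ (Fin n)) :
    ‖(‖h‖ ^ p)⁻¹ • (g x - g (x - h))‖
      ≤ (2 * |A| + |B|) * ((‖h‖ ^ p)⁻¹ * min 1 (‖h‖ ^ β)) := by
  have h0 : 0 ≤ (‖h‖ ^ p)⁻¹ := by positivity
  have hr : 0 ≤ ‖h‖ ^ β := by positivity
  have h1 : ‖g x - g (x - h)‖ ≤ 2 * |A| := by
    have := norm_sub_le (g x) (g (x - h))
    linarith [hA x, hA (x - h), le_abs_self A]
  have h2 : ‖g x - g (x - h)‖ ≤ |B| * ‖h‖ ^ β := by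
    have h3 := hB x (x - h)
    rw [sub_sub_cancel] at h3
    exact h3.trans (mul_le_mul_of_nonneg_right (le_abs_self B) hr)
  have h3 : ‖g x - g (x - h)‖ ≤ (2 * |A| + |B|) * min 1 (‖h‖ ^ β) := by
    rw [mul_min_of_nonneg _ _ (by positivity)]
    refine le_min ?_ ?_
    · linarith [abs_nonneg B]
    · nlinarith [mul_nonneg (abs_nonneg A) hr]
  rw [norm_smul, Real.norm_of_nonneg h0]
  calc _ ≤ (‖h‖ ^ p)⁻¹ * ((2 * |A| + |B|) * min 1 (‖h‖ ^ β)) := mul_le_mul_of_nonneg_left h3 h0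
    _ = _ := by ring

theorem aestronglyMeasurable_kernel_smul {n : ℕ} {p : ℝ} {F : Type*} [NormedAddCommGroup F]
    [NormedSpace ℝ F] {g : EuclideanSpace ℝ (Fin n) → F} (hg : Continuous g)
    (x : EuclideanSpace ℝ (Fin n)) :
    AEStronglyMeasurable (fun h => (‖h‖ ^ p)⁻¹ • (g x - g (x - h))) volume := by
  have h1 : Measurable (fun h : EuclideanSpace ℝ (Fin n) => (‖h‖ ^ p)⁻¹) :=
    (measurable_norm.pow_const p).inv
  have h2 : Continuous (fun h => g x - g (x - h)) := by fun_prop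
  exact h1.aestronglyMeasurable.smul
    h2.aestronglyMeasurable

theorem integrable_kernel_smul {n : ℕ} (hn : 2 ≤ n) {β s : ℝ} (hs : 0 < s) (hsβ : 2 * s < β)
    {F : Type*} [NormedAddCommGroup F]
    [NormedSpace ℝ F] {g : EuclideanSpace ℝ (Fin n) → F} {A B : ℝ} (hg : Continuous g)
    (hA : ∀ x, ‖g x‖ ≤ A) (hB : ∀ x y, ‖g x - g y‖ ≤ B * ‖x - y‖ ^ β)
    (x : EuclideanSpace ℝ (Fin n)) :
    Integrable (fun h => (‖h‖ ^ ((n : ℝ) + 2 * s))⁻¹ • (g x - g (x - h))) :=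
  ((integrable_min_kernel n hn β s hs hsβ).const_mul (2 * |A| + |B|)).mono'
    (aestronglyMeasurable_kernel_smul hg x)
    (Filter.Eventually.of_forall fun h => norm_kernel_smul_le hA hB x h)

theorem statement7
    (n : ℕ) (hn : 2 ≤ n) (α s : ℝ)
    (hα : α ∈ Set.Ioo (0:ℝ) 1) (hs : s ∈ Set.Ioo (0:ℝ) (α / 2))
    (u : EuclideanSpace ℝ (Fin n) → ℝ)
    (hu : ContDiff ℝ 1 u)
    (M M' K : ℝ)
    (hub : ∀ x, |u x| ≤ M)
    (hgb : ∀ x, ‖fderiv ℝ u x‖ ≤ M')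
    (hgh : ∀ x y, ‖fderiv ℝ u x - fderiv ℝ u y‖ ≤ K * ‖x - y‖ ^ α) :
    ∀ (k : Fin n) (x : EuclideanSpace ℝ (Fin n)),
      Integrable (fun y => (u x - u y) / ‖x - y‖ ^ ((n : ℝ) + 2 * s))
      ∧ Integrable (fun y =>
          (fderiv ℝ u x (EuclideanSpace.single k 1) - fderiv ℝ u y (EuclideanSpace.single k 1))
            / ‖x - y‖ ^ ((n : ℝ) + 2 * s))
      ∧ DifferentiableAt ℝ
          (fun z => ∫ y, (u z - u y) / ‖z - y‖ ^ ((n : ℝ) + 2 * s)) x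
      ∧ fderiv ℝ (fun z => ∫ y, (u z - u y) / ‖z - y‖ ^ ((n : ℝ) + 2 * s)) x
            (EuclideanSpace.single k 1)
          = ∫ y, (fderiv ℝ u x (EuclideanSpace.single k 1)
              - fderiv ℝ u y (EuclideanSpace.single k 1)) / ‖x - y‖ ^ ((n : ℝ) + 2 * s) := by
  intro k x
  obtain ⟨hα0, hα1⟩ := hα
  obtain ⟨hs0, hs1⟩ := hs
  have hud : Differentiable ℝ u := hu.differentiable (by norm_num)
  have hdc : Continuous (fderiv ℝ u) := hu.continuous_fderiv (by norm_num)
  have hlip : ∀ x y, ‖u x - u y‖ ≤ M' * ‖x - y‖ ^ (1 : ℝ) := by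
    intro x y
    rw [Real.rpow_one]
    exact convex_univ.norm_image_sub_le_of_norm_fderiv_le (𝕜 := ℝ) (fun z _ => hud z)
      (fun z _ => hgb z) (Set.mem_univ y) (Set.mem_univ x)
  set p : ℝ := (n : ℝ) + 2 * s with hp
  have hub' : ∀ x, ‖u x‖ ≤ M := hub
  have hIu : ∀ z, Integrable (fun h => (‖h‖ ^ p)⁻¹ • (u z - u (z - h))) := fun z =>
    integrable_kernel_smul hn hs0 (by linarith) hu.continuous hub' hlip z
  have hID : Integrable (fun h => (‖h‖ ^ p)⁻¹ • (fderiv ℝ u x - fderiv ℝ u (x - h))) :=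
    integrable_kernel_smul hn hs0 (by linarith) hdc hgb hgh x
  set e : EuclideanSpace ℝ (Fin n) := EuclideanSpace.single k 1 with he
  have hIe : Integrable (fun h =>
      ((‖h‖ ^ p)⁻¹ • (fderiv ℝ u x - fderiv ℝ u (x - h))) e) :=
    hID.apply_continuousLinearMap e
  have hv : (fun z => ∫ y, (u z - u y) / ‖z - y‖ ^ p)
      = fun z => ∫ h, (‖h‖ ^ p)⁻¹ • (u z - u (z - h)) := by
    funext z
    rw [← integral_sub_left_eq_self _ volume z]
    simp only [sub_sub_cancel, smul_eq_mul, div_eq_inv_mul]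
  have hmain : HasFDerivAt (fun z => ∫ y, (u z - u y) / ‖z - y‖ ^ p)
      (∫ h, (‖h‖ ^ p)⁻¹ • (fderiv ℝ u x - fderiv ℝ u (x - h))) x := by
    rw [hv]
    refine hasFDerivAt_integral_of_dominated_of_fderiv_le (s := Set.univ)
      (F' := fun z h => (‖h‖ ^ p)⁻¹ • (fderiv ℝ u z - fderiv ℝ u (z - h)))
      Filter.univ_mem
      (Filter.Eventually.of_forall fun z => (hIu z).aestronglyMeasurable) (hIu x)
      hID.aestronglyMeasurable
      (Filter.Eventually.of_forall fun h z _ => norm_kernel_smul_le hgb hgh z h)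
      ((integrable_min_kernel n hn α s hs0 (by linarith)).const_mul _)
      (Filter.Eventually.of_forall fun h z _ => ?_)
    have h1 : HasFDerivAt (fun z => u (z - h)) (fderiv ℝ u (z - h)) z := by
      rw [hasFDerivAt_comp_sub]
      exact (hud _).hasFDerivAt
    have h2 : HasFDerivAt (fun z => u z - u (z - h)) (fderiv ℝ u z - fderiv ℝ u (z - h)) z :=
      (hud z).hasFDerivAt.sub h1
    exact h2.const_smul ((‖h‖ ^ p)⁻¹)
  refine ⟨?_, ?_, hmain.differentiableAt, ?_⟩
  · refine ((hIu x).comp_sub_left x).congr (Filter.Eventually.of_forall fun y => ?_)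
    simp only [sub_sub_cancel, smul_eq_mul, div_eq_inv_mul]
  · refine (hIe.comp_sub_left x).congr (Filter.Eventually.of_forall fun y => ?_)
    simp only [sub_sub_cancel, smul_apply, sub_apply,
      smul_eq_mul, div_eq_inv_mul]
  · rw [hmain.fderiv, ContinuousLinearMap.integral_apply hID, ← integral_sub_left_eq_self _ volume x]
    simp only [sub_sub_cancel, smul_apply, sub_apply,
      smul_eq_mul, div_eq_inv_mul]
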